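/- arXiv:1809.06931 — 2 statements merged into one kernel-verified Lean document; each statement's English description precedes it below -/
import Mathlib

section
/- Let p be a prime and let B be a blocking set in PG(2, p^3) that does not contain the full point set of any line. Then |B| ≥ p^3 + p^2 + 1. -/
open scoped LinearAlgebra.Projectivization

/-!
Shrink the blocking set to a minimal one and take a tangent line at one of its points as the line
at infinity. This leaves a set `S` of `|B| - 1` affine points `(a, b)` that meets every
non-vertical line. Comparing coefficients in the Rédei polynomial `∏ (X + a U + b)` of `S` shows
that `∏ (X + a) = X ^ q * g + h` with `deg h ≤ deg g = |S| - q`, where `q = p ^ n`. It remains to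
bound `deg g` from below for such a fully reducible lacunary polynomial.

Cancel `gcd g h` and write `g = g₁ ^ p ^ j`, `h = h₁ ^ p ^ j` with `j` as large as possible, so that
`wronskian g₁ h₁` is nonzero. The polynomial `f = X ^ p ^ (n - j) * g₁ + h₁` splits and its roots
are roots of `T = X * g + h`, hence `f` divides `T * wronskian g₁ h₁`, and comparing degrees gives
`p ^ (n - j) ≤ (p ^ j + 1) * deg g₁`. This forces `deg g ≥ p ^ ⌈n / 2⌉`. The argument breaks down
only if `g` and `h` become constant, in which case `S` contains a vertical line.
-/

section Lacunary

open Polynomial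

variable {F : Type*} [Field F] {f g h T : F[X]}

lemma dvd_mul_derivative_of_splits (hf : f.Splits) (hT : ∀ a, f.IsRoot a → T.IsRoot a) :
    f ∣ T * derivative f := by
  classical
  rcases eq_or_ne f 0 with rfl | hf0
  · simp
  rcases eq_or_ne (T * derivative f) 0 with h0 | h0
  · exact h0 ▸ dvd_zero f
  refine hf.dvd_of_roots_le_roots hf0 (Multiset.le_iff_count.2 fun a ↦ ?_)
  rw [count_roots, count_roots, le_rootMultiplicity_iff h0]
  rcases Nat.eq_zero_or_pos (f.rootMultiplicity a) with hzero | hpos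
  · simp [hzero]
  have hTa : X - C a ∣ T := dvd_iff_isRoot.2 (hT a ((rootMultiplicity_pos hf0).1 hpos))
  have hf' : (X - C a) ^ (f.rootMultiplicity a - 1) ∣ derivative f :=
    pow_sub_one_dvd_derivative_of_pow_dvd (pow_rootMultiplicity_dvd f a)
  rw [← Nat.sub_add_cancel hpos, pow_succ']
  exact mul_dvd_mul hTa hf'

lemma wronskian_X_pow_mul_add {Q : ℕ} (hQ : (Q : F) = 0) :
    wronskian g (X ^ Q * g + h) = wronskian g h := by
  have hder : derivative (X ^ Q : F[X]) = 0 := by rw [derivative_X_pow, hQ, C_0, zero_mul]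
  simp only [wronskian, derivative_add, derivative_mul, hder]
  ring

lemma natDegree_X_pow_mul_add {Q : ℕ} (hQ : 0 < Q) (hg : g ≠ 0) (hgh : h.natDegree ≤ g.natDegree) :
    (X ^ Q * g + h).natDegree = Q + g.natDegree := by
  have hdeg : (X ^ Q * g).natDegree = Q + g.natDegree := by
    rw [natDegree_mul (pow_ne_zero Q X_ne_zero) hg, natDegree_X_pow]
  rw [natDegree_add_eq_left_of_natDegree_lt (by omega), hdeg]

lemma X_pow_mul_add_ne_zero {Q : ℕ} (hQ : 0 < Q) (hg : g ≠ 0) (hgh : h.natDegree ≤ g.natDegree) :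
    X ^ Q * g + h ≠ 0 := by
  apply ne_zero_of_natDegree_gt (n := 0)
  rw [natDegree_X_pow_mul_add hQ hg hgh]
  exact Nat.add_pos_left hQ _

-- Each root of multiplicity `μ` of `f = X ^ Q * g + h` is a root of multiplicity at least `μ - 1`
-- of `wronskian g h = g * f' - g' * f`.
lemma lt_natDegree_add_of_wronskian_ne_zero {Q : ℕ} (hQ : 0 < Q) (hQF : (Q : F) = 0)
    (hsplits : (X ^ Q * g + h).Splits) (hgh : h.natDegree ≤ g.natDegree) (hT : T ≠ 0)
    (hroots : ∀ a, (X ^ Q * g + h).IsRoot a → T.IsRoot a) (hW : wronskian g h ≠ 0) :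
    Q < T.natDegree + g.natDegree := by
  have hg : g ≠ 0 := fun hg0 ↦ hW (by rw [hg0, wronskian_zero_left])
  have hdvd : X ^ Q * g + h ∣ T * wronskian g h := by
    rw [← wronskian_X_pow_mul_add hQF, wronskian, mul_sub]
    refine dvd_sub ?_ ((dvd_mul_left _ _).mul_left _)
    rw [mul_left_comm]
    exact (dvd_mul_derivative_of_splits hsplits hroots).mul_left g
  have hle := natDegree_le_of_dvd hdvd (mul_ne_zero hT hW)
  rw [natDegree_X_pow_mul_add hQ hg hgh, natDegree_mul hT hW] at hle
  have hlt := natDegree_wronskian_lt_add hW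
  omega

variable (p : ℕ) [Fact p.Prime] [CharP F p]

lemma exists_eq_pow_of_derivative_eq_zero [PerfectRing F p] (hg : derivative g = 0) :
    ∃ g₁ : F[X], g = g₁ ^ p := by
  have hmap : (frobenius F p).comp (frobeniusEquiv F p).symm.toRingHom = RingHom.id F := by
    ext x
    simp
  refine ⟨(contract p g).map (frobeniusEquiv F p).symm.toRingHom, ?_⟩
  rw [← map_frobenius_expand, ← map_expand, expand_contract p hg (NeZero.ne p), map_map, hmap,
    map_id]

lemma exists_eq_pow_and_wronskian_ne_zero [PerfectRing F p] (hgh : IsCoprime g h)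
    (hg : 0 < g.natDegree) :
    ∃ (j : ℕ) (g₁ h₁ : F[X]), g = g₁ ^ p ^ j ∧ h = h₁ ^ p ^ j ∧ wronskian g₁ h₁ ≠ 0 := by
  have hp : p.Prime := Fact.out
  induction hd : g.natDegree using Nat.strong_induction_on generalizing g h with
  | _ d ih =>
    subst hd
    by_cases hW : wronskian g h = 0
    · obtain ⟨hg', hh'⟩ := hgh.wronskian_eq_zero_iff.1 hW
      obtain ⟨g₀, rfl⟩ := exists_eq_pow_of_derivative_eq_zero p hg'
      obtain ⟨h₀, rfl⟩ := exists_eq_pow_of_derivative_eq_zero p hh'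
      rw [natDegree_pow] at hg ih
      have hg₀ : 0 < g₀.natDegree := Nat.pos_of_mul_pos_left hg
      obtain ⟨j, g₁, h₁, rfl, rfl, hW₁⟩ := ih _ (lt_mul_of_one_lt_left hg₀ hp.one_lt)
        ((IsCoprime.pow_iff hp.pos hp.pos).1 hgh) hg₀ rfl
      exact ⟨j + 1, g₁, h₁, by rw [← pow_mul, pow_succ], by rw [← pow_mul, pow_succ], hW₁⟩
    · exact ⟨0, g, h, by simp, by simp, hW⟩

end Lacunary

lemma pow_le_pow_mul_of_pow_sub_le {p n j k : ℕ} (hp : 2 ≤ p) (hn : 2 ≤ n)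
    (hj : j < (n + 1) / 2) (hk : p ^ (n - j) ≤ (p ^ j + 1) * k) :
    p ^ ((n + 1) / 2) ≤ p ^ j * k := by
  have hpj : 1 ≤ p ^ j := Nat.one_le_pow _ _ (by omega)
  rcases Nat.lt_or_ge ((n + 1) / 2) (n - j) with hlt | hge
  · have hdouble : 2 * p ^ ((n + 1) / 2) ≤ p ^ (n - j) := calc
      2 * p ^ ((n + 1) / 2) ≤ p * p ^ ((n + 1) / 2) := Nat.mul_le_mul_right _ hp
      _ = p ^ ((n + 1) / 2 + 1) := (pow_succ' _ _).symm
      _ ≤ p ^ (n - j) := Nat.pow_le_pow_right (by omega) hlt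
    have hupper : (p ^ j + 1) * k ≤ 2 * (p ^ j * k) := by
      rw [← mul_assoc]
      exact Nat.mul_le_mul_right k (by omega)
    omega
  · obtain ⟨hexp, hsub⟩ : (n + 1) / 2 = j + 1 ∧ n - j = j + 1 := by omega
    rw [hsub] at hk
    rw [hexp, pow_succ]
    refine Nat.mul_le_mul_left _ (not_lt.1 fun hkp ↦ ?_)
    have hkj : k < p ^ j := hkp.trans_le (Nat.le_self_pow (by omega) p)
    have : (p ^ j + 1) * k < p ^ (j + 1) := calc
      (p ^ j + 1) * k = p ^ j * k + k := by ring
      _ < p ^ j * k + p ^ j := by omega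
      _ = p ^ j * (k + 1) := by ring
      _ ≤ p ^ j * p := Nat.mul_le_mul_left _ hkp
      _ = p ^ (j + 1) := (pow_succ _ _).symm
    omega

section FullyReducible

open Polynomial

variable {F : Type*} [Field F] [Fintype F] {p n : ℕ} [Fact p.Prime] {g h : F[X]}

-- If `g` and `h` are constant, then `X ^ q * g + h` is a constant times `(X - a) ^ q`.
lemma natDegree_pos_of_not_X_sub_C_pow_card_dvd (hg : g ≠ 0) (hgh : h.natDegree ≤ g.natDegree)
    (hpow : ∀ a, ¬ (X - C a) ^ Fintype.card F ∣ X ^ Fintype.card F * g + h) :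
    0 < g.natDegree := by
  rw [Nat.pos_iff_ne_zero]
  intro hdeg
  obtain ⟨c, rfl⟩ := natDegree_eq_zero.1 hdeg
  obtain ⟨b, rfl⟩ := natDegree_eq_zero.1 (Nat.le_zero.1 (hdeg ▸ hgh))
  have hc : c ≠ 0 := C_ne_zero.1 hg
  obtain ⟨p, hchar⟩ := CharP.exists F
  obtain ⟨n, hp, hcard⟩ := FiniteField.card F p
  have := Fact.mk hp
  refine hpow (-b / c) ⟨C c, ?_⟩
  rw [hcard, sub_pow_char_pow, ← C_pow, ← hcard, FiniteField.pow_card, sub_mul, ← C_mul,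
    div_mul_cancel₀ _ hc, C_neg, sub_neg_eq_add]

lemma pow_sub_le_of_splits_of_wronskian_ne_zero {j : ℕ} (hj : j < n)
    (hcard : Fintype.card F = p ^ n) (hsplits : (X ^ p ^ n * g ^ p ^ j + h ^ p ^ j).Splits)
    (hgh : h.natDegree ≤ g.natDegree) (hW : wronskian g h ≠ 0) :
    p ^ (n - j) ≤ (p ^ j + 1) * g.natDegree := by
  have hp : p.Prime := Fact.out
  have := charP_of_card_eq_prime_pow hcard
  have hpj : p ^ j ≠ 0 := pow_ne_zero j hp.ne_zero
  have hg : g ≠ 0 := fun hg0 ↦ hW (by rw [hg0, wronskian_zero_left])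
  have hfrob : X ^ p ^ n * g ^ p ^ j + h ^ p ^ j = (X ^ p ^ (n - j) * g + h) ^ p ^ j := by
    rw [add_pow_char_pow, mul_pow, ← pow_mul, ← pow_add, Nat.sub_add_cancel hj.le]
  have hne : X ^ p ^ (n - j) * g + h ≠ 0 :=
    X_pow_mul_add_ne_zero (pow_pos hp.pos _) hg hgh
  have hsplits₁ : (X ^ p ^ (n - j) * g + h).Splits :=
    (hfrob ▸ hsplits).of_dvd (pow_ne_zero _ hne) (dvd_pow_self _ hpj)
  -- `T` takes the same values on `F` as `X ^ q * g ^ p ^ j + h ^ p ^ j`, but has small degree.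
  let T := X ^ 1 * g ^ p ^ j + h ^ p ^ j
  have hghj : (h ^ p ^ j).natDegree ≤ (g ^ p ^ j).natDegree := by
    simpa only [natDegree_pow] using Nat.mul_le_mul_left _ hgh
  have hTdeg : T.natDegree = 1 + p ^ j * g.natDegree := by
    rw [natDegree_X_pow_mul_add one_pos (pow_ne_zero _ hg) hghj, natDegree_pow]
  have hT : T ≠ 0 := X_pow_mul_add_ne_zero one_pos (pow_ne_zero _ hg) hghj
  have hroots (a : F) (ha : (X ^ p ^ (n - j) * g + h).IsRoot a) : T.IsRoot a := by
    have hTa : T.eval a = (X ^ p ^ n * g ^ p ^ j + h ^ p ^ j).eval a := by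
      simp [T, ← hcard, FiniteField.pow_card]
    rw [IsRoot, hTa, hfrob, eval_pow, ha, zero_pow hpj]
  have hlt := lt_natDegree_add_of_wronskian_ne_zero (pow_pos hp.pos _)
    (by simp [Nat.sub_ne_zero_of_lt hj]) hsplits₁ hgh hT hroots hW
  rw [hTdeg] at hlt
  linarith

lemma pow_le_natDegree_of_isCoprime (hn : 2 ≤ n) (hcard : Fintype.card F = p ^ n)
    (hsplits : (X ^ p ^ n * g + h).Splits) (hg : 0 < g.natDegree)
    (hgh : h.natDegree ≤ g.natDegree) (hcop : IsCoprime g h) :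
    p ^ ((n + 1) / 2) ≤ g.natDegree := by
  have hp : p.Prime := Fact.out
  have := charP_of_card_eq_prime_pow hcard
  obtain ⟨j, g₁, h₁, rfl, rfl, hW⟩ := exists_eq_pow_and_wronskian_ne_zero p hcop hg
  simp only [natDegree_pow] at hg hgh ⊢
  rcases Nat.lt_or_ge j ((n + 1) / 2) with hj | hj
  · have hgh₁ : h₁.natDegree ≤ g₁.natDegree := Nat.le_of_mul_le_mul_left hgh (pow_pos hp.pos j)
    exact pow_le_pow_mul_of_pow_sub_le hp.two_le hn hj
      (pow_sub_le_of_splits_of_wronskian_ne_zero (by omega) hcard hsplits hgh₁ hW)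
  · exact (Nat.pow_le_pow_right hp.pos hj).trans
      (Nat.le_mul_of_pos_right _ (Nat.pos_of_mul_pos_left hg))

lemma pow_le_natDegree_of_splits (hn : 2 ≤ n) (hcard : Fintype.card F = p ^ n)
    (hsplits : (X ^ p ^ n * g + h).Splits) (hg : g ≠ 0) (hgh : h.natDegree ≤ g.natDegree)
    (hpow : ∀ a, ¬ (X - C a) ^ p ^ n ∣ X ^ p ^ n * g + h) :
    p ^ ((n + 1) / 2) ≤ g.natDegree := by
  classical
  have hpn : 0 < p ^ n := hcard ▸ Fintype.card_pos
  obtain ⟨g₀, h₀, hg₀, hh₀, hunit⟩ := extract_gcd g h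
  generalize gcd g h = d at hg₀ hh₀
  subst hg₀ hh₀
  obtain ⟨hd, hg₀⟩ := mul_ne_zero_iff.1 hg
  have hdvd : X ^ p ^ n * g₀ + h₀ ∣ X ^ p ^ n * (d * g₀) + d * h₀ := ⟨d, by ring⟩
  have hne : X ^ p ^ n * (d * g₀) + d * h₀ ≠ 0 := X_pow_mul_add_ne_zero hpn hg hgh
  have hgh₀ : h₀.natDegree ≤ g₀.natDegree := by
    rcases eq_or_ne h₀ 0 with rfl | hh₀
    · simp
    · rwa [natDegree_mul hd hh₀, natDegree_mul hd hg₀, add_le_add_iff_left] at hgh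
  have hpos : 0 < g₀.natDegree := natDegree_pos_of_not_X_sub_C_pow_card_dvd hg₀ hgh₀
    fun a ha ↦ hpow a (hcard ▸ ha.trans (hcard ▸ hdvd))
  calc p ^ ((n + 1) / 2) ≤ g₀.natDegree :=
        pow_le_natDegree_of_isCoprime hn hcard (hsplits.of_dvd hne hdvd) hpos hgh₀
          ((gcd_isUnit_iff _ _).1 hunit)
    _ ≤ (d * g₀).natDegree := natDegree_le_of_dvd (dvd_mul_left _ _) hg

end FullyReducible

open Polynomial in
lemma exists_eq_X_pow_mul_add {R : Type*} [CommRing R] [Nontrivial R] {f : R[X]} {q k : ℕ}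
    (hq : 0 < q) (hdeg : f.natDegree = q + k) (hcoeff : ∀ i, k < i → i < q → f.coeff i = 0) :
    ∃ g h : R[X], f = X ^ q * g + h ∧ g ≠ 0 ∧ g.natDegree = k ∧ h.natDegree ≤ k := by
  have hmod : (f %ₘ X ^ q).natDegree < q := by
    simpa using natDegree_modByMonic_lt f (monic_X_pow q)
      (fun h ↦ by simpa [hq.ne'] using congrArg natDegree h)
  have hdecomp : X ^ q * (f /ₘ X ^ q) + f %ₘ X ^ q = f := by
    rw [add_comm, modByMonic_add_div]
  refine ⟨f /ₘ X ^ q, f %ₘ X ^ q, hdecomp.symm, fun hdiv ↦ ?_, ?_, ?_⟩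
  · rw [hdiv, mul_zero, zero_add] at hdecomp
    rw [hdecomp] at hmod
    omega
  · rw [natDegree_divByMonic f (monic_X_pow q), hdeg, natDegree_X_pow, Nat.add_sub_cancel_left]
  · refine natDegree_le_iff_coeff_eq_zero.2 fun i hi ↦ ?_
    rcases Nat.lt_or_ge i q with hiq | hiq
    · have hfi : f.coeff i = (f %ₘ X ^ q).coeff i := by
        conv_lhs => rw [← hdecomp]
        rw [coeff_add, coeff_X_pow_mul', if_neg (Nat.not_le.2 hiq), zero_add]
      rw [← hfi, hcoeff i hi hiq]
    · exact coeff_eq_zero_of_natDegree_lt (hmod.trans_le hiq)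

section ProdXAddC

open Polynomial

variable {R ι : Type*} [CommRing R] {S : Finset ι}

lemma monic_prod_X_add_C (S : Finset ι) (r : ι → R) : (∏ s ∈ S, (X + C (r s))).Monic :=
  monic_prod_of_monic _ _ fun s _ ↦ monic_X_add_C (r s)

lemma natDegree_prod_X_add_C [Nontrivial R] (S : Finset ι) (r : ι → R) :
    (∏ s ∈ S, (X + C (r s))).natDegree = S.card := by
  rw [natDegree_prod_of_monic _ _ fun s _ ↦ monic_X_add_C (r s)]
  simp

lemma roots_prod_X_add_C [IsDomain R] (S : Finset ι) (r : ι → R) :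
    (∏ s ∈ S, (X + C (r s))).roots = S.val.map fun s ↦ -r s := by
  rw [← roots_multiset_prod_X_sub_C (S.val.map fun s ↦ -r s), Multiset.map_map]
  simp

lemma le_card_filter_of_X_sub_C_pow_dvd_prod [IsDomain R] [DecidableEq R] {r : ι → R} {a : R}
    {m : ℕ} (hdvd : (X - C a) ^ m ∣ ∏ s ∈ S, (X + C (r s))) :
    m ≤ {s ∈ S | r s = -a}.card := by
  rw [← le_rootMultiplicity_iff (monic_prod_X_add_C S r).ne_zero, ← count_roots,
    roots_prod_X_add_C, Multiset.count_map] at hdvd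
  simpa only [Finset.card_def, Finset.filter_val, eq_comm (a := a), neg_eq_iff_eq_neg] using hdvd

variable {r : ι → R[X]}

lemma natDegree_coeff_prod_X_add_C_le (hr : ∀ s ∈ S, (r s).natDegree ≤ 1) {i : ℕ}
    (hi : i ≤ S.card) : ((∏ s ∈ S, (X + C (r s))).coeff i).natDegree ≤ S.card - i := by
  rw [Finset.prod_X_add_C_coeff S r hi]
  refine natDegree_sum_le_of_forall_le _ _ fun t ht ↦ ?_
  rw [Finset.mem_powersetCard] at ht
  calc (∏ s ∈ t, r s).natDegree ≤ ∑ s ∈ t, (r s).natDegree := natDegree_prod_le t r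
    _ ≤ t.card • 1 := Finset.sum_le_card_nsmul _ _ _ fun s hs ↦ hr s (ht.1 hs)
    _ = S.card - i := by rw [smul_eq_mul, mul_one, ht.2]

lemma coeff_coeff_prod_X_add_C (hr : ∀ s ∈ S, (r s).natDegree ≤ 1) {i : ℕ} (hi : i ≤ S.card) :
    ((∏ s ∈ S, (X + C (r s))).coeff i).coeff (S.card - i) =
      (∏ s ∈ S, (X + C ((r s).coeff 1))).coeff i := by
  rw [Finset.prod_X_add_C_coeff S r hi, Finset.prod_X_add_C_coeff S _ hi, finsetSum_coeff]
  refine Finset.sum_congr rfl fun t ht ↦ ?_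
  rw [Finset.mem_powersetCard] at ht
  rw [← ht.2, ← mul_one t.card, coeff_prod_of_natDegree_le t r 1 fun s hs ↦ hr s (ht.1 hs)]

end ProdXAddC

section Redei

open Polynomial

variable {F : Type*} [Field F] [Fintype F]

lemma X_pow_card_sub_X_dvd {G : F[X]} (hG : ∀ a, G.eval a = 0) :
    X ^ Fintype.card F - X ∣ G := by
  rcases eq_or_ne G 0 with rfl | hG0
  · exact dvd_zero _
  have hroots := FiniteField.roots_X_pow_card_sub_X F
  have hsplits : (X ^ Fintype.card F - X : F[X]).Splits := by
    rw [splits_iff_card_roots, hroots,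
      FiniteField.X_pow_card_sub_X_natDegree_eq F Fintype.one_lt_card, Finset.card_val,
      Finset.card_univ]
  refine hsplits.dvd_of_roots_le_roots
    (FiniteField.X_pow_card_sub_X_ne_zero F Fintype.one_lt_card) ?_
  rw [hroots, Multiset.le_iff_subset Finset.univ.nodup]
  exact fun a _ ↦ (mem_roots hG0).2 (hG a)

lemma coeff_eq_ite_of_eval_eq_zero {G : F[X]} {i k : ℕ} (hG : ∀ a, G.eval a = 0)
    (hmonic : G.Monic) (hdeg : G.natDegree = Fintype.card F + k) (hki : k < i)
    (hi : i < Fintype.card F) : G.coeff i = if i = k + 1 then -1 else 0 := by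
  obtain ⟨Q, rfl⟩ := X_pow_card_sub_X_dvd hG
  have hXmonic : (X ^ Fintype.card F - X : F[X]).Monic :=
    monic_X_pow_sub (by simpa using Fintype.one_lt_card)
  have hQmonic : Q.Monic := hXmonic.of_mul_monic_left hmonic
  have hQdeg : Q.natDegree = k := by
    rw [hXmonic.natDegree_mul hQmonic,
      FiniteField.X_pow_card_sub_X_natDegree_eq F Fintype.one_lt_card] at hdeg
    omega
  obtain ⟨i, rfl⟩ := Nat.exists_eq_succ_of_ne_zero (Nat.ne_zero_of_lt hki)
  rw [sub_mul, coeff_sub, coeff_X_pow_mul', if_neg (by omega), coeff_X_mul, zero_sub]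
  split_ifs with hik
  · rw [Nat.succ_injective hik, ← hQdeg, hQmonic.coeff_natDegree]
  · rw [coeff_eq_zero_of_natDegree_lt (by omega), neg_zero]

/-- A set of points of the affine plane `F × F` blocks the lines `y = u * x + v` if it meets each
of them. -/
def BlocksNonverticalLines (S : Finset (F × F)) : Prop :=
  ∀ u v : F, ∃ s ∈ S, s.2 = u * s.1 + v

variable {S : Finset (F × F)}

/-- The Rédei polynomial `∏ (X + a U + b)` of a set of points `(a, b)`, with `X` the outer and `U`
the inner variable. -/
noncomputable def redeiPolynomial (S : Finset (F × F)) : F[X][X] :=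
  ∏ s ∈ S, (X + C (C s.1 * X + C s.2))

lemma BlocksNonverticalLines.card_le (hS : BlocksNonverticalLines S) :
    Fintype.card F ≤ S.card := by
  classical
  have himage : S.image Prod.snd = Finset.univ := by
    refine Finset.eq_univ_of_forall fun v ↦ ?_
    obtain ⟨s, hs, hsv⟩ := hS 0 v
    exact Finset.mem_image.2 ⟨s, hs, by rw [hsv, zero_mul, zero_add]⟩
  rw [← Finset.card_univ, ← himage]
  exact Finset.card_image_le

lemma BlocksNonverticalLines.eval_coeff_redeiPolynomial (hS : BlocksNonverticalLines S)
    {i k : ℕ} (hcard : S.card = Fintype.card F + k) (hki : k < i) (hi : i < Fintype.card F)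
    (u : F) : ((redeiPolynomial S).coeff i).eval u = if i = k + 1 then -1 else 0 := by
  have hmap : (redeiPolynomial S).map (evalRingHom u) = ∏ s ∈ S, (X + C (s.1 * u + s.2)) := by
    simp [redeiPolynomial, Polynomial.map_prod]
  rw [← coe_evalRingHom, ← coeff_map, hmap]
  refine coeff_eq_ite_of_eval_eq_zero (fun v ↦ ?_) (monic_prod_X_add_C _ _)
    ((natDegree_prod_X_add_C _ _).trans hcard) hki hi
  obtain ⟨s, hs, hline⟩ := hS (-u) (-v)
  rw [eval_prod]
  refine Finset.prod_eq_zero hs ?_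
  rw [eval_add, eval_X, eval_C, hline]
  ring

-- The coefficient of `X ^ i` in the Rédei polynomial has degree at most `|S| - i < q` in `U` and is
-- constant on `F`, so it is a constant; its coefficient of `U ^ (|S| - i)` is that of `∏ (X + a)`.
lemma BlocksNonverticalLines.coeff_prod_eq_zero (hS : BlocksNonverticalLines S) {i k : ℕ}
    (hcard : S.card = Fintype.card F + k) (hki : k < i) (hi : i < Fintype.card F) :
    (∏ s ∈ S, (X + C s.1)).coeff i = 0 := by
  have hiS : i ≤ S.card := by omega
  have hlinear (s : F × F) (_ : s ∈ S) : (C s.1 * X + C s.2).natDegree ≤ 1 := natDegree_linear_le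
  have hdeg : ((redeiPolynomial S).coeff i).natDegree < Fintype.card F :=
    (natDegree_coeff_prod_X_add_C_le hlinear hiS).trans_lt (by omega)
  have hconst : (redeiPolynomial S).coeff i = C (if i = k + 1 then -1 else 0) := by
    refine eq_of_natDegree_lt_card_of_eval_eq' _ _ Finset.univ (fun u _ ↦ ?_) ?_
    · rw [hS.eval_coeff_redeiPolynomial hcard hki hi, eval_C]
    · rwa [natDegree_C, Finset.card_univ, Nat.max_zero]
  calc (∏ s ∈ S, (X + C s.1)).coeff i = ((redeiPolynomial S).coeff i).coeff (S.card - i) := by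
        rw [redeiPolynomial, coeff_coeff_prod_X_add_C hlinear hiS]
        simp only [coeff_add, coeff_C_mul, coeff_X_one, coeff_C_succ, mul_one, add_zero]
    _ = 0 := by rw [hconst, coeff_C_of_ne_zero (by omega)]

lemma card_filter_fst_eq_lt {α β : Type*} [DecidableEq α] [Fintype β] {S : Finset (α × β)} {a : α}
    {b : β} (hab : (a, b) ∉ S) : {s ∈ S | s.1 = a}.card < Fintype.card β := by
  classical
  have hssub : {s ∈ S | s.1 = a} ⊂ Finset.univ.image (Prod.mk a) := by
    refine Finset.ssubset_iff_subset_ne.2 ⟨fun s hs ↦ ?_, fun heq ↦ hab ?_⟩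
    · exact Finset.mem_image.2 ⟨s.2, Finset.mem_univ _, by rw [← (Finset.mem_filter.1 hs).2]⟩
    · exact Finset.mem_of_mem_filter _ (heq ▸ Finset.mem_image_of_mem _ (Finset.mem_univ b))
  exact (Finset.card_lt_card hssub).trans_le Finset.card_image_le

theorem BlocksNonverticalLines.pow_add_pow_le_card {p n : ℕ} [Fact p.Prime] (hn : 2 ≤ n)
    (hcard : Fintype.card F = p ^ n) (hS : BlocksNonverticalLines S)
    (hvert : ∀ a, ∃ b, (a, b) ∉ S) : p ^ n + p ^ ((n + 1) / 2) ≤ S.card := by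
  classical
  obtain ⟨k, hk⟩ := Nat.exists_eq_add_of_le hS.card_le
  obtain ⟨g, h, hdecomp, hg, hgdeg, hhdeg⟩ := exists_eq_X_pow_mul_add Fintype.card_pos
    ((natDegree_prod_X_add_C S Prod.fst).trans hk) fun i ↦ hS.coeff_prod_eq_zero hk
  have hpow (a : F) : ¬ (X - C a) ^ Fintype.card F ∣ ∏ s ∈ S, (X + C s.1) := by
    obtain ⟨b, hb⟩ := hvert (-a)
    exact fun hdvd ↦
      (le_card_filter_of_X_sub_C_pow_dvd_prod hdvd).not_gt (card_filter_fst_eq_lt hb)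
  rw [hcard] at hdecomp hpow hk
  have hle := pow_le_natDegree_of_splits hn hcard
    (hdecomp ▸ Splits.prod fun s _ ↦ Splits.X_add_C s.1) hg (hhdeg.trans_eq hgdeg.symm)
    (hdecomp ▸ hpow)
  omega

end Redei

section Projective

open Module Projectivization

variable {F V : Type*} [Field F] [AddCommGroup V] [Module F V]

/-- A set of points of the projective space of `V` is blocking if it meets every line, lines being
the 2-dimensional subspaces of `V`. -/
def IsBlockingSet (B : Set (ℙ F V)) : Prop :=
  ∀ W : Submodule F V, finrank F W = 2 → ∃ x ∈ B, x.submodule ≤ W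

lemma exists_tangent_of_minimal {B : Set (ℙ F V)} (hB : Minimal IsBlockingSet B) {x : ℙ F V}
    (hx : x ∈ B) :
    ∃ W : Submodule F V, finrank F W = 2 ∧ x.submodule ≤ W ∧
      ∀ y ∈ B, y.submodule ≤ W → y = x := by
  have hnot : ¬ IsBlockingSet (B \ {x}) := fun hblock ↦
    (hB.le_of_le hblock Set.sdiff_subset hx).2 rfl
  simp only [IsBlockingSet, not_forall, not_exists, not_and] at hnot
  obtain ⟨W, hW, hmeet⟩ := hnot
  have htangent : ∀ y ∈ B, y.submodule ≤ W → y = x := fun y hy hyW ↦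
    by_contra fun hne ↦ hmeet y ⟨hy, hne⟩ hyW
  obtain ⟨y, hy, hyW⟩ := hB.prop W hW
  exact ⟨W, hW, htangent y hy hyW ▸ hyW, htangent⟩

lemma submodule_le_iff_rep_mem (x : ℙ F V) (W : Submodule F V) : x.submodule ≤ W ↔ x.rep ∈ W := by
  rw [submodule_eq, Submodule.span_singleton_le_iff_mem]

lemma finrank_ker_eq_two (hV : finrank F V = 3) {φ : Dual F V} (hφ : φ ≠ 0) :
    finrank F (LinearMap.ker φ) = 2 := by
  have : FiniteDimensional F V := .of_finrank_pos (by omega)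
  have := Dual.finrank_ker_add_one_of_ne_zero hφ
  omega

lemma coord_basis_ne_zero {ι : Type*} (b : Basis ι F V) (i : ι) : b.coord i ≠ 0 := fun h ↦ by
  simpa using congr($h (b i))

lemma exists_basis_ker_coord_eq (hV : finrank F V = 3) {W : Submodule F V}
    (hW : finrank F W = 2) {x : ℙ F V} (hxW : x.submodule ≤ W) :
    ∃ b : Basis (Fin 3) F V, x = mk F (b 2) (b.ne_zero 2) ∧ LinearMap.ker (b.coord 0) = W := by
  have : FiniteDimensional F V := .of_finrank_pos (by omega)
  obtain ⟨v, -, hv⟩ : ∃ v ∈ (⊤ : Submodule F V), v ∉ W := by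
    refine SetLike.exists_of_lt (lt_top_iff_ne_top.2 fun h ↦ ?_)
    rw [h, finrank_top] at hW
    omega
  obtain ⟨w, hwW, hw⟩ : ∃ w ∈ W, w ∉ x.submodule := by
    refine SetLike.exists_of_lt (lt_of_le_of_ne hxW fun h ↦ ?_)
    rw [← h, finrank_submodule] at hW
    omega
  have hxW' : x.rep ∈ W := (submodule_le_iff_rep_mem x W).1 hxW
  have hspan : Submodule.span F (Set.range ![w, x.rep]) ≤ W := by
    simp [Submodule.span_le, Set.insert_subset_iff, hwW, hxW']
  have hli : LinearIndependent F ![v, w, x.rep] := by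
    refine linearIndependent_finCons.2 ⟨linearIndependent_finCons.2 ⟨?_, ?_⟩, fun h ↦ hv (hspan h)⟩
    · simpa using x.rep_nonzero
    · simpa [← submodule_eq] using hw
  let b := basisOfLinearIndependentOfCardEqFinrank hli (by simp [hV])
  have hb : b = ![v, w, x.rep] := coe_basisOfLinearIndependentOfCardEqFinrank hli _
  refine ⟨b, ?_, ?_⟩
  · simp [hb]
  · have hker := finrank_ker_eq_two hV (φ := b.coord 0) (coord_basis_ne_zero b 0)
    refine Submodule.eq_of_le_of_finrank_eq (fun y hy ↦ ?_) (hker.trans hW.symm)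
    rw [← b.sum_repr y, Fin.sum_univ_three]
    have h0 : b.repr y 0 = 0 := hy
    simpa [h0, hb] using W.add_mem (W.smul_mem (b.repr y 1) hwW) (W.smul_mem (b.repr y 2) hxW')

variable (b : Basis (Fin 3) F V)

/-- The vector with coordinates `(1, s.1, s.2)` with respect to `b`. -/
noncomputable def affineVector (s : F × F) : V := b 0 + s.1 • b 1 + s.2 • b 2

lemma coord_zero_affineVector (s : F × F) : b.coord 0 (affineVector b s) = 1 := by
  simp [affineVector]

lemma coord_one_affineVector (s : F × F) : b.coord 1 (affineVector b s) = s.1 := by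
  simp [affineVector]

lemma coord_two_affineVector (s : F × F) : b.coord 2 (affineVector b s) = s.2 := by
  simp [affineVector]

lemma affineVector_ne_zero (s : F × F) : affineVector b s ≠ 0 := fun h ↦ by
  simpa [h] using coord_zero_affineVector b s

/-- The point with homogeneous coordinates `[1 : s.1 : s.2]` with respect to `b`. The line at
infinity of this affine chart is the kernel of `b.coord 0`. -/
noncomputable def affinePoint (s : F × F) : ℙ F V :=
  mk F (affineVector b s) (affineVector_ne_zero b s)

variable {b}

lemma affinePoint_submodule_le_iff {s : F × F} {W : Submodule F V} :
    (affinePoint b s).submodule ≤ W ↔ affineVector b s ∈ W := by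
  rw [affinePoint, submodule_mk, Submodule.span_singleton_le_iff_mem]

lemma affinePoint_injective : Function.Injective (affinePoint b) := by
  intro s t hst
  obtain ⟨c, hc⟩ := (mk_eq_mk_iff' _ _ _ _ _).1 hst
  have hcoord (i : Fin 3) : c * b.coord i (affineVector b t) = b.coord i (affineVector b s) := by
    rw [← hc, map_smul, smul_eq_mul]
  have h0 := hcoord 0
  have h1 := hcoord 1
  have h2 := hcoord 2
  simp only [coord_zero_affineVector, coord_one_affineVector, coord_two_affineVector] at h0 h1 h2
  rw [mul_one] at h0
  rw [h0, one_mul] at h1 h2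
  exact Prod.ext h1.symm h2.symm

lemma affinePoint_ne_mk_basis_two (s : F × F) : affinePoint b s ≠ mk F (b 2) (b.ne_zero 2) := by
  intro h
  obtain ⟨c, hc⟩ := (mk_eq_mk_iff' _ _ _ _ _).1 h
  simpa [← hc] using coord_zero_affineVector b s

lemma exists_affinePoint_eq {x : ℙ F V} (hx : ¬ x.submodule ≤ LinearMap.ker (b.coord 0)) :
    ∃ s, affinePoint b s = x := by
  rw [submodule_le_iff_rep_mem, LinearMap.mem_ker] at hx
  refine ⟨(b.coord 1 x.rep / b.coord 0 x.rep, b.coord 2 x.rep / b.coord 0 x.rep), ?_⟩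
  rw [← x.mk_rep, affinePoint, mk_eq_mk_iff']
  refine ⟨(b.coord 0 x.rep)⁻¹, ?_⟩
  conv_lhs => rw [← b.sum_repr x.rep, Fin.sum_univ_three]
  simp only [Basis.coord_apply] at hx
  simp [affineVector, smul_smul, hx, div_eq_inv_mul]

lemma eq_mk_basis_two {x : ℙ F V} (h0 : x.submodule ≤ LinearMap.ker (b.coord 0))
    (h1 : x.submodule ≤ LinearMap.ker (b.coord 1)) : x = mk F (b 2) (b.ne_zero 2) := by
  rw [submodule_le_iff_rep_mem, LinearMap.mem_ker, Basis.coord_apply] at h0 h1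
  rw [← x.mk_rep, mk_eq_mk_iff']
  refine ⟨b.repr x.rep 2, ?_⟩
  conv_rhs => rw [← b.sum_repr x.rep, Fin.sum_univ_three]
  simp [h0, h1]

variable [Fintype F] {B : Set (ℙ F V)}

open Classical in
/-- The points of `B` in the affine chart of `b`, as pairs of affine coordinates. -/
noncomputable def affinePart (b : Basis (Fin 3) F V) (B : Set (ℙ F V)) : Finset (F × F) :=
  {s | affinePoint b s ∈ B}

lemma mem_affinePart {s : F × F} : s ∈ affinePart b B ↔ affinePoint b s ∈ B := by
  simp [affinePart]

lemma card_affinePart_lt_ncard (hB : B.Finite) (hb : mk F (b 2) (b.ne_zero 2) ∈ B) :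
    (affinePart b B).card < B.ncard := by
  rw [← Set.ncard_coe_finset, ← Set.ncard_image_of_injective _ (affinePoint_injective (b := b))]
  refine Set.ncard_lt_ncard (Set.ssubset_iff_subset_ne.2 ⟨?_, fun h ↦ ?_⟩) hB
  · rintro _ ⟨s, hs, rfl⟩
    exact mem_affinePart.1 hs
  · obtain ⟨s, -, hs⟩ := h ▸ hb
    exact affinePoint_ne_mk_basis_two s hs

lemma IsBlockingSet.blocksNonverticalLines_affinePart (hB : IsBlockingSet B)
    (htangent : ∀ x ∈ B, x.submodule ≤ LinearMap.ker (b.coord 0) → x = mk F (b 2) (b.ne_zero 2)) :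
    BlocksNonverticalLines (affinePart b B) := by
  intro u v
  let φ : Dual F V := b.coord 2 - u • b.coord 1 - v • b.coord 0
  have hφb : φ (b 2) = 1 := by simp [φ]
  have hφ : φ ≠ 0 := fun h ↦ by simp [h] at hφb
  obtain ⟨x, hxB, hx⟩ := hB _ (finrank_ker_eq_two (finrank_eq_card_basis b) hφ)
  have hx_affine : ¬ x.submodule ≤ LinearMap.ker (b.coord 0) := by
    intro hx0
    rw [htangent x hxB hx0, submodule_mk, Submodule.span_singleton_le_iff_mem, LinearMap.mem_ker,
      hφb] at hx
    exact one_ne_zero hx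
  obtain ⟨s, rfl⟩ := exists_affinePoint_eq hx_affine
  refine ⟨s, mem_affinePart.2 hxB, ?_⟩
  rw [affinePoint_submodule_le_iff, LinearMap.mem_ker] at hx
  simp only [φ, LinearMap.sub_apply, LinearMap.smul_apply, coord_zero_affineVector,
    coord_one_affineVector, coord_two_affineVector, smul_eq_mul] at hx
  linear_combination hx

lemma exists_notMem_affinePart (hb : mk F (b 2) (b.ne_zero 2) ∈ B)
    (hline : ∀ W : Submodule F V, finrank F W = 2 → ¬ {x : ℙ F V | x.submodule ≤ W} ⊆ B) (a : F) :
    ∃ c, (a, c) ∉ affinePart b B := by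
  let φ : Dual F V := b.coord 1 - a • b.coord 0
  have hφ : φ ≠ 0 := fun h ↦ by simpa [φ] using congr($h (b 1))
  obtain ⟨x, hx, hxB⟩ :=
    Set.not_subset.1 (hline _ (finrank_ker_eq_two (finrank_eq_card_basis b) hφ))
  have hx_affine : ¬ x.submodule ≤ LinearMap.ker (b.coord 0) := by
    intro hx0
    refine hxB (eq_mk_basis_two hx0 (fun v hv ↦ ?_) ▸ hb)
    have hφv : φ v = 0 := hx hv
    have h0v : b.coord 0 v = 0 := hx0 hv
    simpa [φ, h0v] using hφv
  obtain ⟨s, rfl⟩ := exists_affinePoint_eq hx_affine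
  have hs : s.1 = a := by
    have := affinePoint_submodule_le_iff.1 hx
    simpa only [φ, LinearMap.mem_ker, LinearMap.sub_apply, LinearMap.smul_apply,
      coord_zero_affineVector, coord_one_affineVector, smul_eq_mul, mul_one, sub_eq_zero] using this
  subst hs
  exact ⟨s.2, fun h ↦ hxB (mem_affinePart.1 h)⟩

end Projective

theorem statement14_general {F V : Type*} [Field F] [AddCommGroup V] [Module F V] {p n : ℕ}
    [Fact p.Prime] (hn : 2 ≤ n) (hF : Nat.card F = p ^ n) (hV : Module.finrank F V = 3)
    {B : Set (ℙ F V)} (hblock : IsBlockingSet B)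
    (hline : ∀ W : Submodule F V, Module.finrank F W = 2 →
      ¬ {x : ℙ F V | x.submodule ≤ W} ⊆ B) :
    p ^ n + p ^ ((n + 1) / 2) + 1 ≤ B.ncard := by
  have hp : p.Prime := Fact.out
  have : Finite F := Nat.finite_of_card_ne_zero (hF ▸ pow_ne_zero n hp.ne_zero)
  have := Fintype.ofFinite F
  rw [Nat.card_eq_fintype_card] at hF
  have : FiniteDimensional F V := .of_finrank_pos (by omega)
  have : Finite V := Module.finite_of_finite F
  obtain ⟨B₀, hB₀, hmin⟩ := exists_minimal_le_of_wellFoundedLT IsBlockingSet B hblock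
  obtain ⟨x, hx⟩ : B₀.Nonempty := by
    let b := Module.finBasisOfFinrankEq F V hV
    obtain ⟨x, hx, -⟩ := hmin.prop _ (finrank_ker_eq_two hV (coord_basis_ne_zero b 0))
    exact ⟨x, hx⟩
  obtain ⟨W, hW, hxW, htangent⟩ := exists_tangent_of_minimal hmin hx
  obtain ⟨b, rfl, rfl⟩ := exists_basis_ker_coord_eq hV hW hxW
  have hvert := exists_notMem_affinePart hx fun W hW hWB ↦ hline W hW (hWB.trans hB₀)
  calc p ^ n + p ^ ((n + 1) / 2) + 1 ≤ (affinePart b B₀).card + 1 := Nat.succ_le_succ <|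
        (hmin.prop.blocksNonverticalLines_affinePart htangent).pow_add_pow_le_card hn hF hvert
    _ ≤ B₀.ncard := card_affinePart_lt_ncard B₀.toFinite hx
    _ ≤ B.ncard := Set.ncard_le_ncard hB₀

/-- (Blokhuis) Let `p` be a prime and let `B` be a blocking set in `PG(2, p³)` (points are the
1-dimensional subspaces of `F_{p³}^3`, lines are the 2-dimensional subspaces) that does not
contain the full point set of any line. Then `|B| ≥ p³ + p² + 1`. -/
theorem statement14 (p : ℕ) [Fact p.Prime]
    (B : Set (ℙ (GaloisField p 3) (Fin 3 → GaloisField p 3)))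
    (hblock : ∀ W : Submodule (GaloisField p 3) (Fin 3 → GaloisField p 3),
      Module.finrank (GaloisField p 3) W = 2 → ∃ x ∈ B, x.submodule ≤ W)
    (hline : ∀ W : Submodule (GaloisField p 3) (Fin 3 → GaloisField p 3),
      Module.finrank (GaloisField p 3) W = 2 →
      ¬ {x : ℙ (GaloisField p 3) (Fin 3 → GaloisField p 3) | x.submodule ≤ W} ⊆ B) :
    p ^ 3 + p ^ 2 + 1 ≤ B.ncard :=
  statement14_general (by norm_num) (GaloisField.card p 3 (by norm_num)) (by simp) hblock hline
end

section
/- Consider the hypergraph G1 whose vertex set is {1,...,6} × {1,...,4} (vertex (i, j) being the i-th vertex of side j), and whose edges are the fourteen 4-element sets encoded by the vectors 1111, 1333, 1444, 5314, 6341, 6413, 2222, 2155, 3162, 4652, 4265, 2666, 2562, 1211, where the vector abcd encodes the edge {(a,1), (b,2), (c,3), (d,4)}. Then G1 is a 4-partite hypergraph (with sides {1,...,6} × {j} for j = 1, 2, 3, 4) whose matching number is ν(G1) = 2 and whose vertex cover number is τ(G1) = 6; in particular G1 is a 4-Ryser hypergraph. -/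
/-- `B` is a vertex cover of the hypergraph with edge set `E`: it meets every edge. -/
def IsCover {α : Type} [DecidableEq α] (E : Finset (Finset α)) (B : Finset α) : Prop :=
  ∀ e ∈ E, (e ∩ B).Nonempty

/-- `M` is a matching of the hypergraph with edge set `E`: a set of pairwise disjoint edges. -/
def IsMatching {α : Type} [DecidableEq α] (E : Finset (Finset α)) (M : Finset (Finset α)) : Prop :=
  M ⊆ E ∧ ∀ e ∈ M, ∀ f ∈ M, e ≠ f → Disjoint e f

/-- The vertex cover number `τ`: the minimum size of a vertex cover. -/
noncomputable def coverNumber {α : Type} [DecidableEq α] (E : Finset (Finset α)) : ℕ :=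
  sInf {n | ∃ B : Finset α, IsCover E B ∧ B.card = n}

/-- The matching number `ν`: the maximum size of a matching. -/
noncomputable def matchingNumber {α : Type} [DecidableEq α] (E : Finset (Finset α)) : ℕ :=
  sSup {n | ∃ M : Finset (Finset α), IsMatching E M ∧ M.card = n}

/-- The hypergraph with vertex set `V` and edge set `E` is `r`-partite: `V` is partitioned into
`r` pairwise disjoint sides such that every edge contains exactly one vertex of each side. -/
def IsPartite {α : Type} [DecidableEq α] (r : ℕ) (V : Finset α) (E : Finset (Finset α)) : Prop :=
  (∀ e ∈ E, e ⊆ V) ∧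
  ∃ sides : Fin r → Finset α,
    (∀ i j, i ≠ j → Disjoint (sides i) (sides j)) ∧
    V = Finset.univ.biUnion sides ∧
    ∀ e ∈ E, ∀ i, (e ∩ sides i).card = 1

/-- The subhypergraph of `(·, E)` determined by the edge subset `E'` (whose vertex set is the
union of the edges of `E'`) is an intersecting `r`-Ryser hypergraph: it is `r`-partite, has
matching number `1`, and has vertex cover number at least `(r-1)` times its matching number. -/
def IsIntersectingRyserSub {α : Type} [DecidableEq α] (r : ℕ)
    (E E' : Finset (Finset α)) : Prop :=
  E' ⊆ E ∧ IsPartite r (E'.sup id) E' ∧ matchingNumber E' = 1 ∧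
    (r - 1) * matchingNumber E' ≤ coverNumber E'

/-- The edge of the hypergraph `G1` encoded by the vector `abcd`:
it contains the `a`-th vertex of side 1, the `b`-th vertex of side 2,
the `c`-th vertex of side 3 and the `d`-th vertex of side 4. -/
def enc (a b c d : ℕ) : Finset (ℕ × ℕ) := {(a, 1), (b, 2), (c, 3), (d, 4)}

/-- The edge set of the hypergraph `G1` of Abu-Khazneh. -/
def G1 : Finset (Finset (ℕ × ℕ)) :=
  {enc 1 1 1 1, enc 1 3 3 3, enc 1 4 4 4, enc 5 3 1 4, enc 6 3 4 1, enc 6 4 1 3,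
   enc 2 2 2 2, enc 2 1 5 5, enc 3 1 6 2, enc 4 6 5 2, enc 4 2 6 5, enc 2 6 6 6,
   enc 2 5 6 2, enc 1 2 1 1}

/-- The vertex set of `G1`: `{1,...,6} × {1,...,4}`. -/
def G1V : Finset (ℕ × ℕ) := Finset.Icc 1 6 ×ˢ Finset.Icc 1 4

/-- The `j`-th side of `G1`: `{1,...,6} × {j}`. -/
def G1side (j : Fin 4) : Finset (ℕ × ℕ) := Finset.Icc 1 6 ×ˢ {(j : ℕ) + 1}

/-!
`G1` is the union of two intersecting families of seven edges each: `leftEdges`, consisting of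
`1111`, `1333`, `1444`, `5314`, `6341`, `6413`, `1211`, and `rightEdges`, consisting of the rest.
A matching has at most one edge in each of them, so `ν(G1) ≤ 2`.

The two families have only the vertices `(1, 2)` and `(2, 2)` in common. Fix which of these two
vertices a cover `B` uses. The other vertices of `B` then have to cover the two residual families,
whose vertex sets are disjoint, so the cover numbers of these add up. The left residual family
needs two vertices if both shared vertices are used, and three otherwise: then `1111` or `1211`
avoids the shared vertices in `B`, and these two edges agree outside the shared vertices. The right
one needs three vertices if no shared vertex is used, and two in any case. Altogether `B` has at
least `0 + 3 + 3`, `1 + 3 + 2` or `2 + 2 + 2` vertices.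
-/

section Hypergraph

variable {α : Type} [DecidableEq α] {E F : Finset (Finset α)} {B : Finset α}

instance : Decidable (IsCover E B) :=
  inferInstanceAs (Decidable (∀ e ∈ E, (e ∩ B).Nonempty))

instance {M : Finset (Finset α)} : Decidable (IsMatching E M) :=
  inferInstanceAs (Decidable (M ⊆ E ∧ ∀ e ∈ M, ∀ f ∈ M, e ≠ f → Disjoint e f))

theorem IsMatching.inter {M : Finset (Finset α)} (hM : IsMatching E M) (F : Finset (Finset α)) :
    IsMatching F (M ∩ F) :=
  ⟨Finset.inter_subset_right, fun e he f hf =>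
    hM.2 e (Finset.mem_of_mem_inter_left he) f (Finset.mem_of_mem_inter_left hf)⟩

theorem IsMatching.card_le_matchingNumber {M : Finset (Finset α)} (hM : IsMatching E M) :
    M.card ≤ matchingNumber E := by
  refine le_csSup ⟨E.card, ?_⟩ ⟨M, hM, rfl⟩
  rintro _ ⟨N, hN, rfl⟩
  exact Finset.card_le_card hN.1

theorem matchingNumber_le {n : ℕ} (h : ∀ M, IsMatching E M → M.card ≤ n) :
    matchingNumber E ≤ n := by
  refine csSup_le ⟨0, ∅, by simp [IsMatching], rfl⟩ ?_
  rintro _ ⟨M, hM, rfl⟩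
  exact h M hM

theorem matchingNumber_union_le (E F : Finset (Finset α)) :
    matchingNumber (E ∪ F) ≤ matchingNumber E + matchingNumber F := by
  refine matchingNumber_le fun M hM => ?_
  calc M.card = (M ∩ E ∪ M ∩ F).card := by
        rw [← Finset.inter_union_distrib_left, Finset.inter_eq_left.2 hM.1]
    _ ≤ (M ∩ E).card + (M ∩ F).card := Finset.card_union_le _ _
    _ ≤ matchingNumber E + matchingNumber F :=
        add_le_add (hM.inter E).card_le_matchingNumber (hM.inter F).card_le_matchingNumber

theorem matchingNumber_le_one_of_intersecting (h : ∀ e ∈ E, ∀ f ∈ E, ¬Disjoint e f) :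
    matchingNumber E ≤ 1 := by
  refine matchingNumber_le fun M hM => Finset.card_le_one.2 fun e he f hf => ?_
  by_contra hef
  exact h e (hM.1 he) f (hM.1 hf) (hM.2 e he f hf hef)

theorem IsCover.mono_left (hB : IsCover E B) (hFE : F ⊆ E) : IsCover F B :=
  fun e he => hB e (hFE he)

theorem IsCover.mono_right {B' : Finset α} (hB : IsCover E B) (hBB' : B ⊆ B') : IsCover E B' :=
  fun e he => (hB e he).mono (Finset.inter_subset_inter_left hBB')

theorem IsCover.inter_sup (hB : IsCover E B) : IsCover E (B ∩ E.sup id) := by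
  intro e he
  have heE : e ⊆ E.sup id := Finset.le_sup (f := id) he
  rw [Finset.inter_left_comm, Finset.inter_eq_left.2 heE, Finset.inter_comm]
  exact hB e he

theorem isCover_sup (hE : ∅ ∉ E) : IsCover E (E.sup id) := by
  intro e he
  have heE : e ⊆ E.sup id := Finset.le_sup (f := id) he
  rw [Finset.inter_eq_left.2 heE, Finset.nonempty_iff_ne_empty]
  exact ne_of_mem_of_not_mem he hE

theorem IsCover.coverNumber_le_card (hB : IsCover E B) : coverNumber E ≤ B.card :=
  Nat.sInf_le ⟨B, hB, rfl⟩

-- A hypergraph with an empty edge has no cover, and then `coverNumber` is the junk value `sInf ∅`.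
theorem le_coverNumber {n : ℕ} (hE : ∅ ∉ E) (h : ∀ B, IsCover E B → n ≤ B.card) :
    n ≤ coverNumber E := by
  refine le_csInf ⟨_, _, isCover_sup hE, rfl⟩ ?_
  rintro _ ⟨B, hB, rfl⟩
  exact h B hB

theorem empty_notMem_of_coverNumber_pos (h : 0 < coverNumber E) : ∅ ∉ E := by
  obtain ⟨_, B, hB, -⟩ := Nat.nonempty_of_pos_sInf h
  intro hE
  simpa using hB ∅ hE

theorem lt_coverNumber_iff {k : ℕ} :
    k < coverNumber E ↔ ∅ ∉ E ∧ k ≤ (E.sup id).card ∧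
      ∀ B ∈ (E.sup id).powersetCard k, ¬IsCover E B := by
  constructor
  · intro h
    have hE : ∅ ∉ E := empty_notMem_of_coverNumber_pos (Nat.zero_lt_of_lt h)
    refine ⟨hE, h.le.trans (isCover_sup hE).coverNumber_le_card, fun B hBk hB => ?_⟩
    exact (h.trans_le hB.coverNumber_le_card).ne' (Finset.mem_powersetCard.1 hBk).2
  · rintro ⟨hE, hk, h⟩
    refine le_coverNumber hE fun B hB => ?_
    by_contra! hBk
    have hcard : (B ∩ E.sup id).card ≤ k :=
      (Finset.card_le_card Finset.inter_subset_left).trans (Nat.le_of_lt_succ hBk)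
    obtain ⟨B', hBB', hB'E, hB'k⟩ :=
      Finset.exists_subsuperset_card_eq Finset.inter_subset_right hcard hk
    exact h B' (Finset.mem_powersetCard.2 ⟨hB'E, hB'k⟩) (hB.inter_sup.mono_right hBB')

theorem IsCover.coverNumber_add_coverNumber_le_card (hE : IsCover E B) (hF : IsCover F B)
    (hEF : Disjoint (E.sup id) (F.sup id)) : coverNumber E + coverNumber F ≤ B.card :=
  calc coverNumber E + coverNumber F ≤ (B ∩ E.sup id).card + (B ∩ F.sup id).card :=
        add_le_add hE.inter_sup.coverNumber_le_card hF.inter_sup.coverNumber_le_card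
    _ = (B ∩ E.sup id ∪ B ∩ F.sup id).card :=
        (Finset.card_union_of_disjoint
          (hEF.mono Finset.inter_subset_right Finset.inter_subset_right)).symm
    _ ≤ B.card :=
        Finset.card_le_card (Finset.union_subset Finset.inter_subset_left Finset.inter_subset_left)

/-- The hypergraph that a cover of `E` still has to cover outside `T` once its intersection with
`T` is known to be `C`: the edges avoiding `C`, with the vertices of `T` removed. -/
def residualEdges (E : Finset (Finset α)) (T C : Finset α) : Finset (Finset α) :=
  {e ∈ E | Disjoint e C}.image (· \ T)

theorem IsCover.residualEdges_sdiff (hB : IsCover E B) (T : Finset α) :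
    IsCover (residualEdges E T (B ∩ T)) (B \ T) := by
  intro f hf
  obtain ⟨e, he, rfl⟩ := Finset.mem_image.1 hf
  obtain ⟨heE, heC⟩ := Finset.mem_filter.1 he
  obtain ⟨v, hv⟩ := hB e heE
  obtain ⟨hve, hvB⟩ := Finset.mem_inter.1 hv
  have hvT : v ∉ T := fun hvT =>
    Finset.disjoint_left.1 heC hve (Finset.mem_inter.2 ⟨hvB, hvT⟩)
  exact ⟨v, Finset.mem_inter.2 ⟨Finset.mem_sdiff.2 ⟨hve, hvT⟩, Finset.mem_sdiff.2 ⟨hvB, hvT⟩⟩⟩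

theorem sup_residualEdges_subset (E : Finset (Finset α)) (T C : Finset α) :
    (residualEdges E T C).sup id ⊆ E.sup id \ T := by
  refine Finset.sup_le fun f hf => ?_
  obtain ⟨e, he, rfl⟩ := Finset.mem_image.1 hf
  exact Finset.sdiff_subset_sdiff (Finset.le_sup (f := id) (Finset.mem_filter.1 he).1) subset_rfl

theorem disjoint_sup_residualEdges {T : Finset α} (hT : E.sup id ∩ F.sup id ⊆ T) (C : Finset α) :
    Disjoint ((residualEdges E T C).sup id) ((residualEdges F T C).sup id) := by
  refine Finset.disjoint_left.2 fun v hvE hvF => ?_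
  obtain ⟨hE, hvT⟩ := Finset.mem_sdiff.1 (sup_residualEdges_subset E T C hvE)
  obtain ⟨hF, -⟩ := Finset.mem_sdiff.1 (sup_residualEdges_subset F T C hvF)
  exact hvT (hT (Finset.mem_inter.2 ⟨hE, hF⟩))

theorem IsCover.card_inter_add_coverNumber_residualEdges_le_card {T : Finset α}
    (hB : IsCover (E ∪ F) B) (hT : E.sup id ∩ F.sup id ⊆ T) :
    (B ∩ T).card + (coverNumber (residualEdges E T (B ∩ T)) +
      coverNumber (residualEdges F T (B ∩ T))) ≤ B.card := by
  have hE : IsCover E B := hB.mono_left Finset.subset_union_left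
  have hF : IsCover F B := hB.mono_left Finset.subset_union_right
  rw [← Finset.card_inter_add_card_sdiff B T]
  gcongr
  exact (hE.residualEdges_sdiff T).coverNumber_add_coverNumber_le_card (hF.residualEdges_sdiff T)
    (disjoint_sup_residualEdges hT _)

end Hypergraph

/-- The first of the two intersecting families into which the edges of `G1` are split. -/
def leftEdges : Finset (Finset (ℕ × ℕ)) :=
  {enc 1 1 1 1, enc 1 3 3 3, enc 1 4 4 4, enc 5 3 1 4, enc 6 3 4 1, enc 6 4 1 3, enc 1 2 1 1}

/-- The second of the two intersecting families into which the edges of `G1` are split. -/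
def rightEdges : Finset (Finset (ℕ × ℕ)) :=
  {enc 2 2 2 2, enc 2 1 5 5, enc 3 1 6 2, enc 4 6 5 2, enc 4 2 6 5, enc 2 6 6 6, enc 2 5 6 2}

/-- The vertices that lie both on an edge of `leftEdges` and on an edge of `rightEdges`. -/
def sharedVertices : Finset (ℕ × ℕ) := {(1, 2), (2, 2)}

theorem G1_eq_union : G1 = leftEdges ∪ rightEdges := by decide +kernel

theorem sup_leftEdges_inter_sup_rightEdges :
    leftEdges.sup id ∩ rightEdges.sup id = sharedVertices := by decide +kernel

theorem leftEdges_intersecting : ∀ e ∈ leftEdges, ∀ f ∈ leftEdges, ¬Disjoint e f := by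
  decide +kernel

theorem rightEdges_intersecting : ∀ e ∈ rightEdges, ∀ f ∈ rightEdges, ¬Disjoint e f := by
  decide +kernel

theorem matchingNumber_G1 : matchingNumber G1 = 2 := by
  have hM : IsMatching G1 {enc 1 1 1 1, enc 2 2 2 2} := by decide +kernel
  refine le_antisymm ?_ hM.card_le_matchingNumber
  calc matchingNumber G1 ≤ matchingNumber leftEdges + matchingNumber rightEdges :=
        G1_eq_union ▸ matchingNumber_union_le leftEdges rightEdges
    _ ≤ 1 + 1 := add_le_add (matchingNumber_le_one_of_intersecting leftEdges_intersecting)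
        (matchingNumber_le_one_of_intersecting rightEdges_intersecting)

theorem two_lt_coverNumber_residualEdges_leftEdges :
    ∀ C ∈ sharedVertices.ssubsets, 2 < coverNumber (residualEdges leftEdges sharedVertices C) := by
  simp only [lt_coverNumber_iff]
  decide +kernel

theorem one_lt_coverNumber_residualEdges_leftEdges_self :
    1 < coverNumber (residualEdges leftEdges sharedVertices sharedVertices) := by
  rw [lt_coverNumber_iff]
  decide +kernel

theorem two_lt_coverNumber_residualEdges_rightEdges_empty :
    2 < coverNumber (residualEdges rightEdges sharedVertices ∅) := by
  rw [lt_coverNumber_iff]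
  decide +kernel

theorem one_lt_coverNumber_residualEdges_rightEdges :
    ∀ C ∈ sharedVertices.powerset,
      1 < coverNumber (residualEdges rightEdges sharedVertices C) := by
  simp only [lt_coverNumber_iff]
  decide +kernel

theorem six_le_card_add_coverNumber_residualEdges {C : Finset (ℕ × ℕ)} (hC : C ⊆ sharedVertices) :
    6 ≤ C.card + (coverNumber (residualEdges leftEdges sharedVertices C) +
      coverNumber (residualEdges rightEdges sharedVertices C)) := by
  have hright := one_lt_coverNumber_residualEdges_rightEdges C (Finset.mem_powerset.2 hC)
  obtain rfl | hC_ssubset := hC.eq_or_ssubset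
  · have hleft := one_lt_coverNumber_residualEdges_leftEdges_self
    have hcard : sharedVertices.card = 2 := rfl
    omega
  · have hleft := two_lt_coverNumber_residualEdges_leftEdges C (Finset.mem_ssubsets.2 hC_ssubset)
    obtain rfl | hC_nonempty := C.eq_empty_or_nonempty
    · have hright' := two_lt_coverNumber_residualEdges_rightEdges_empty
      omega
    · have hcard := hC_nonempty.card_pos
      omega

theorem coverNumber_G1 : coverNumber G1 = 6 := by
  have hcover : IsCover G1 {(1, 1), (1, 2), (1, 3), (1, 4), (2, 1), (4, 1)} := by decide +kernel
  refine le_antisymm hcover.coverNumber_le_card (le_coverNumber (by decide +kernel) fun B hB => ?_)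
  rw [G1_eq_union] at hB
  exact (six_le_card_add_coverNumber_residualEdges Finset.inter_subset_right).trans
    (hB.card_inter_add_coverNumber_residualEdges_le_card sup_leftEdges_inter_sup_rightEdges.subset)

theorem disjoint_G1side : ∀ i j : Fin 4, i ≠ j → Disjoint (G1side i) (G1side j) := by
  decide +kernel

theorem G1V_eq_biUnion_G1side : G1V = Finset.univ.biUnion G1side := by decide +kernel

theorem subset_G1V_of_mem_G1 : ∀ e ∈ G1, e ⊆ G1V := by decide +kernel

theorem card_inter_G1side_of_mem_G1 : ∀ e ∈ G1, ∀ j : Fin 4, (e ∩ G1side j).card = 1 := by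
  decide +kernel

theorem isPartite_G1 : IsPartite 4 G1V G1 :=
  ⟨subset_G1V_of_mem_G1, G1side, disjoint_G1side, G1V_eq_biUnion_G1side,
    card_inter_G1side_of_mem_G1⟩

/-- The hypergraph `G1` with vertex set `{1,...,6} × {1,...,4}` and the fourteen edges encoded by
`1111, 1333, 1444, 5314, 6341, 6413, 2222, 2155, 3162, 4652, 4265, 2666, 2562, 1211` is
`4`-partite with sides `{1,...,6} × {j}` for `j = 1, 2, 3, 4`, has matching number `2` and
vertex cover number `6`; in particular it is a `4`-Ryser hypergraph. -/
theorem statement18 :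
    (∀ i j : Fin 4, i ≠ j → Disjoint (G1side i) (G1side j)) ∧
    G1V = Finset.univ.biUnion G1side ∧
    (∀ e ∈ G1, e ⊆ G1V) ∧
    (∀ e ∈ G1, ∀ j : Fin 4, (e ∩ G1side j).card = 1) ∧
    IsPartite 4 G1V G1 ∧
    matchingNumber G1 = 2 ∧
    coverNumber G1 = 6 ∧
    (4 - 1) * matchingNumber G1 ≤ coverNumber G1 := by
  refine ⟨disjoint_G1side, G1V_eq_biUnion_G1side, subset_G1V_of_mem_G1,
    card_inter_G1side_of_mem_G1, isPartite_G1, matchingNumber_G1, coverNumber_G1, ?_⟩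
  rw [matchingNumber_G1, coverNumber_G1]
end
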